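/- Let G be a group acting acylindrically and by isometries on a geodesic δ-hyperbolic metric space S. Then every pair of distinct points of the Gromov boundary ∂S satisfies condition (C3) for the induced action of G on ∂S. -/

import Mathlib

/-- A geodesic segment from `u` to `v`: the image of an isometric embedding of
`[0, dist u v]` sending the endpoints to `u` and `v`. -/
def IsGeodesicSegment {S : Type*} [MetricSpace S] (Γ : Set S) (u v : S) : Prop :=
  ∃ γ : ℝ → S, γ 0 = u ∧ γ (dist u v) = v ∧
    (∀ s ∈ Set.Icc (0 : ℝ) (dist u v), ∀ t ∈ Set.Icc (0 : ℝ) (dist u v),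
      dist (γ s) (γ t) = |s - t|) ∧
    Γ = γ '' Set.Icc (0 : ℝ) (dist u v)

/-- A geodesic metric space: every pair of points is joined by a geodesic segment. -/
def GeodesicSpace (S : Type*) [MetricSpace S] : Prop :=
  ∀ u v : S, ∃ Γ : Set S, IsGeodesicSegment Γ u v

/-- `δ`-hyperbolicity: every geodesic triangle is `δ`-slim. -/
def DeltaHyperbolic (S : Type*) [MetricSpace S] (δ : ℝ) : Prop :=
  ∀ x y z : S, ∀ Γ₁ Γ₂ Γ₃ : Set S,
    IsGeodesicSegment Γ₁ x y → IsGeodesicSegment Γ₂ y z → IsGeodesicSegment Γ₃ z x →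
    ∀ p ∈ Γ₁, Metric.infDist p (Γ₂ ∪ Γ₃) ≤ δ

/-- A (left) action of a group `G` on a set `M`, given as a plain function. -/
def IsAction {G M : Type*} [Group G] (act : G → M → M) : Prop :=
  (∀ x : M, act 1 x = x) ∧ ∀ (g h : G) (x : M), act (g * h) x = act g (act h x)

/-- An action by homeomorphisms on a topological space. -/
def IsActionByHomeos {G M : Type*} [Group G] [TopologicalSpace M] (act : G → M → M) : Prop :=
  IsAction act ∧ ∀ g : G, Continuous (act g)

/-- An action by isometries on a metric space. -/
def IsIsometricAction {G S : Type*} [Group G] [MetricSpace S] (act : G → S → S) : Prop :=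
  IsAction act ∧ ∀ g : G, Isometry (act g)

theorem IsAction.injective {G M : Type*} [Group G] {act : G → M → M}
    (h : IsAction act) (g : G) : Function.Injective (act g) := by
  intro a b hab
  have h2 := congrArg (act g⁻¹) hab
  rw [← h.2 g⁻¹ g a, ← h.2 g⁻¹ g b, inv_mul_cancel, h.1, h.1] at h2
  exact h2

/-- The Gromov product of `x` and `y` with respect to the basepoint `e`. -/
noncomputable def gprod {S : Type*} [MetricSpace S] (e x y : S) : ℝ :=
  (dist x e + dist y e - dist x y) / 2

/-- A sequence converges to infinity if its pairwise Gromov products tend to infinity. -/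
def ConvToInfty {S : Type*} [MetricSpace S] (e : S) (s : ℕ → S) : Prop :=
  Filter.Tendsto (fun p : ℕ × ℕ => gprod e (s p.1) (s p.2)) Filter.atTop Filter.atTop

/-- The type of sequences in `S` converging to infinity. -/
def BSeq (S : Type*) [MetricSpace S] (e : S) := {s : ℕ → S // ConvToInfty e s}

/-- Two sequences converging to infinity are equivalent if their mutual Gromov
products tend to infinity. -/
def bequiv {S : Type*} [MetricSpace S] (e : S) (s t : BSeq S e) : Prop :=
  Filter.Tendsto (fun n => gprod e (s.1 n) (t.1 n)) Filter.atTop Filter.atTop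

/-- The Gromov boundary of `S` with respect to the basepoint `e`. -/
def GBoundary (S : Type*) [MetricSpace S] (e : S) := Quot (bequiv (S := S) e)

/-- A sequence in `S` tends to the boundary point `x`. -/
def TendstoBd {S : Type*} [MetricSpace S] (e : S) (s : ℕ → S) (x : GBoundary S e) : Prop :=
  ∃ h : ConvToInfty e s, Quot.mk _ (⟨s, h⟩ : BSeq S e) = x

/-- The Gromov product of a point `u ∈ S` with a boundary point `x`:
the infimum over sequences tending to `x` of the liminf of Gromov products. -/
noncomputable def gprodSB {S : Type*} [MetricSpace S] (e u : S) (x : GBoundary S e) : EReal :=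
  sInf {r : EReal | ∃ s : ℕ → S, TendstoBd e s x ∧
    r = Filter.liminf (fun n => (gprod e u (s n) : EReal)) Filter.atTop}

/-- The Gromov product of two boundary points. -/
noncomputable def gprodBB {S : Type*} [MetricSpace S] (e : S) (x y : GBoundary S e) : EReal :=
  sInf {r : EReal | ∃ s t : ℕ → S, TendstoBd e s x ∧ TendstoBd e t y ∧
    r = Filter.liminf (fun p : ℕ × ℕ => (gprod e (s p.1) (t p.2) : EReal)) Filter.atTop}

/-- `UK e K x = {s ∈ S | (x·s)_e > K}`. -/
def UK {S : Type*} [MetricSpace S] (e : S) (K : ℝ) (x : GBoundary S e) : Set S :=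
  {u : S | (K : EReal) < gprodSB e u x}

/-- `d'(x,y) = exp (−ζ (x·y)_e)` on the boundary (equal to `0` when the product is `∞`). -/
noncomputable def dExp {S : Type*} [MetricSpace S] (e : S) (ζ : ℝ) (x y : GBoundary S e) : ℝ :=
  if gprodBB e x y = ⊤ then 0 else Real.exp (-ζ * (gprodBB e x y).toReal)

/-- The chain metric `ρ(x,y) = inf Σ d'(s_k, s_{k+1})` over finite chains from `x` to `y`. -/
noncomputable def rhoChain {S : Type*} [MetricSpace S] (e : S) (ζ : ℝ)
    (x y : GBoundary S e) : ℝ :=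
  sInf {r : ℝ | ∃ (n : ℕ) (c : ℕ → GBoundary S e), c 0 = x ∧ c n = y ∧
    r = ∑ k ∈ Finset.range n, dExp e ζ (c k) (c (k + 1))}

/-- `ρ` is a metric. -/
def IsMetricFn {B : Type*} (ρ : B → B → ℝ) : Prop :=
  (∀ x y, 0 ≤ ρ x y) ∧ (∀ x y, ρ x y = 0 ↔ x = y) ∧ (∀ x y, ρ x y = ρ y x) ∧
  ∀ x y z, ρ x z ≤ ρ x y + ρ y z

/-- `ζ` is a suitable visual parameter: `ζ > 0`, the associated chain function `ρ` is a
metric on the boundary, and `d'/2 ≤ ρ ≤ d'`. -/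
def VisualParam {S : Type*} [MetricSpace S] (e : S) (ζ : ℝ) : Prop :=
  0 < ζ ∧ IsMetricFn (rhoChain e ζ) ∧
  ∀ x y : GBoundary S e, dExp e ζ x y / 2 ≤ rhoChain e ζ x y ∧ rhoChain e ζ x y ≤ dExp e ζ x y

/-- The topology on the Gromov boundary induced by the visual metric `ρ`. -/
noncomputable def bdTopology (S : Type*) [MetricSpace S] (e : S) (ζ : ℝ) :
    TopologicalSpace (GBoundary S e) :=
  TopologicalSpace.generateFrom
    {B | ∃ (x : GBoundary S e) (ε : ℝ), 0 < ε ∧ B = {y | rhoChain e ζ x y < ε}}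

theorem gprod_comp_ge {S : Type*} [MetricSpace S] (e : S) {f : S → S} (hf : Isometry f)
    (a b : S) : gprod e a b - dist (f e) e ≤ gprod e (f a) (f b) := by
  have h1 : dist a e - dist (f e) e ≤ dist (f a) e := by
    have h := dist_triangle (f a) e (f e)
    rw [hf.dist_eq] at h
    have hc := dist_comm e (f e)
    linarith
  have h2 : dist b e - dist (f e) e ≤ dist (f b) e := by
    have h := dist_triangle (f b) e (f e)
    rw [hf.dist_eq] at h
    have hc := dist_comm e (f e)
    linarith
  have h3 : dist (f a) (f b) = dist a b := hf.dist_eq a b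
  simp only [gprod, h3]; linarith

theorem ConvToInfty.comp {S : Type*} [MetricSpace S] {e : S} {f : S → S} (hf : Isometry f)
    {s : ℕ → S} (hs : ConvToInfty e s) : ConvToInfty e (fun n => f (s n)) := by
  have h : Filter.Tendsto (fun p : ℕ × ℕ => gprod e (s p.1) (s p.2) + -dist (f e) e)
      Filter.atTop Filter.atTop := Filter.tendsto_atTop_add_const_right _ _ hs
  refine Filter.tendsto_atTop_mono (fun p => ?_) h
  have := gprod_comp_ge e hf (s p.1) (s p.2)
  simpa [sub_eq_add_neg] using this

/-- The map induced on the Gromov boundary by an isometry of `S`. -/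
def bdMap {S : Type*} [MetricSpace S] (e : S) (f : S → S) (hf : Isometry f) :
    GBoundary S e → GBoundary S e :=
  Quot.map (fun s : BSeq S e => (⟨fun n => f (s.1 n), s.2.comp hf⟩ : BSeq S e))
    (by
      intro s t h
      have h' : Filter.Tendsto (fun n => gprod e (s.1 n) (t.1 n) + -dist (f e) e)
          Filter.atTop Filter.atTop := Filter.tendsto_atTop_add_const_right _ _ h
      refine Filter.tendsto_atTop_mono (fun n => ?_) h'
      have := gprod_comp_ge e hf (s.1 n) (t.1 n)
      simpa [sub_eq_add_neg] using this)

/-- The induced map on pairs. -/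
def pairMap {M : Type*} (f : M → M) (p : M × M) : M × M := (f p.1, f p.2)

/-- Condition (C) for an action on a topological space. -/
def ConditionC {G M : Type*} [TopologicalSpace M] (act : G → M → M) : Prop :=
  ∀ u v : M × M, u.1 = u.2 → v.1 = v.2 → u ≠ v →
    ∃ U V : Set (M × M), IsOpen U ∧ IsOpen V ∧ u ∈ U ∧ v ∈ V ∧
      ∀ a b : M × M, a.1 ≠ a.2 → b.1 ≠ b.2 → a ≠ b →
        ∃ A B : Set (M × M), IsOpen A ∧ IsOpen B ∧ a ∈ A ∧ b ∈ B ∧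
          {g : G | (pairMap (act g) '' A ∩ U).Nonempty ∧
            (pairMap (act g) '' B ∩ V).Nonempty}.Finite

/-- Condition (C₁) for a pair of open sets `U, V`. -/
def CondC1 {G M : Type*} [TopologicalSpace M] (act : G → M → M) (U V : Set M) : Prop :=
  ∀ p q : M, p ≠ q →
    ∃ A B : Set M, IsOpen A ∧ IsOpen B ∧ p ∈ A ∧ q ∈ B ∧
      {g : G | (act g '' A ∩ U).Nonempty ∧ (act g '' A ∩ V).Nonempty ∧
        (act g '' B ∩ U).Nonempty ∧ (act g '' B ∩ V).Nonempty}.Finite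

/-- Condition (C₂) for a pair of open sets `U, V`. -/
def CondC2 {G M : Type*} [TopologicalSpace M] (act : G → M → M) (U V : Set M) : Prop :=
  ∀ p q r : M, p ≠ q → q ≠ r → p ≠ r →
    ∃ A B C : Set M, IsOpen A ∧ IsOpen B ∧ IsOpen C ∧ p ∈ A ∧ q ∈ B ∧ r ∈ C ∧
      {g : G | (act g '' A ∩ U).Nonempty ∧ (act g '' B ∩ V).Nonempty ∧
        (act g '' C ∩ U).Nonempty ∧ (act g '' C ∩ V).Nonempty}.Finite

/-- Condition (C₃) for a pair of open sets `U, V`. -/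
def CondC3 {G M : Type*} [TopologicalSpace M] (act : G → M → M) (U V : Set M) : Prop :=
  ∀ p q r s : M, p ≠ q → p ≠ r → p ≠ s → q ≠ r → q ≠ s → r ≠ s →
    ∃ A B C D : Set M, IsOpen A ∧ IsOpen B ∧ IsOpen C ∧ IsOpen D ∧
      p ∈ A ∧ q ∈ B ∧ r ∈ C ∧ s ∈ D ∧
      {g : G | (act g '' A ∩ U).Nonempty ∧ (act g '' B ∩ U).Nonempty ∧
        (act g '' C ∩ V).Nonempty ∧ (act g '' D ∩ V).Nonempty}.Finite

/-- Two points `x, y` satisfy (C₁): some open sets `U ∋ x`, `V ∋ y` satisfy (C₁). -/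
def PairC1 {G M : Type*} [TopologicalSpace M] (act : G → M → M) (x y : M) : Prop :=
  ∃ U V : Set M, IsOpen U ∧ IsOpen V ∧ x ∈ U ∧ y ∈ V ∧ CondC1 (G := G) act U V

/-- Two points `x, y` satisfy (C₂). -/
def PairC2 {G M : Type*} [TopologicalSpace M] (act : G → M → M) (x y : M) : Prop :=
  ∃ U V : Set M, IsOpen U ∧ IsOpen V ∧ x ∈ U ∧ y ∈ V ∧ CondC2 (G := G) act U V

/-- Two points `x, y` satisfy (C₃). -/
def PairC3 {G M : Type*} [TopologicalSpace M] (act : G → M → M) (x y : M) : Prop :=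
  ∃ U V : Set M, IsOpen U ∧ IsOpen V ∧ x ∈ U ∧ y ∈ V ∧ CondC3 (G := G) act U V

/-- `g` has north–south dynamics on `M` with fixed points `x ≠ y`. -/
def NorthSouthAt {G M : Type*} [Group G] [TopologicalSpace M] (act : G → M → M)
    (g : G) (x y : M) : Prop :=
  x ≠ y ∧ (∀ z : M, act g z = z ↔ z = x ∨ z = y) ∧
  ∀ U V : Set M, IsOpen U → IsOpen V → x ∈ U → y ∈ V →
    ∃ N : ℕ, ∀ n : ℕ, N < n → act (g ^ n) '' Uᶜ ⊆ V

/-- `g` has north–south dynamics on `M`. -/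
def NorthSouth {G M : Type*} [Group G] [TopologicalSpace M] (act : G → M → M) (g : G) : Prop :=
  ∃ x y : M, NorthSouthAt act g x y

/-- A completely Hausdorff space: distinct points are separated by open sets with
disjoint closures. -/
def CompletelyHausdorff (M : Type*) [TopologicalSpace M] : Prop :=
  ∀ u v : M, u ≠ v → ∃ U V : Set M, IsOpen U ∧ IsOpen V ∧ u ∈ U ∧ v ∈ V ∧
    closure U ∩ closure V = ∅

/-- An acylindrical action on a metric space. -/
def AcylindricalAction {G S : Type*} [Group G] [MetricSpace S] (act : G → S → S) : Prop :=
  ∀ ε : ℝ, 0 < ε → ∃ (R : ℝ) (N : ℕ), 0 < R ∧ 0 < N ∧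
    ∀ x y : S, R ≤ dist x y →
      {g : G | dist x (act g x) ≤ ε ∧ dist y (act g y) ≤ ε}.Finite ∧
      {g : G | dist x (act g x) ≤ ε ∧ dist y (act g y) ≤ ε}.ncard ≤ N

/-- The limit set of the action of `G` on the boundary of `S`. -/
def limitSet {G S : Type*} [Group G] [MetricSpace S] (act : G → S → S) (e : S) :
    Set (GBoundary S e) :=
  {x | ∃ (s : S) (gs : ℕ → G), TendstoBd e (fun n => act (gs n) s) x}

/-- The action is non-elementary: the limit set has at least 3 points. -/
def NonelemAction {G S : Type*} [Group G] [MetricSpace S] (act : G → S → S) (e : S) : Prop :=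
  ∃ x y z : GBoundary S e, x ∈ limitSet act e ∧ y ∈ limitSet act e ∧ z ∈ limitSet act e ∧
    x ≠ y ∧ y ≠ z ∧ x ≠ z

/-- A group is acylindrically hyperbolic if it admits a non-elementary acylindrical
isometric action on a geodesic Gromov hyperbolic space. -/
def AcylindricallyHyperbolic (G : Type*) [Group G] : Prop :=
  ∃ (S : Type) (_i : MetricSpace S) (act : G → S → S) (δ : ℝ),
    0 ≤ δ ∧ GeodesicSpace S ∧ DeltaHyperbolic S δ ∧ IsIsometricAction act ∧
    AcylindricalAction act ∧ ∃ e : S, NonelemAction act e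

/-- A group is virtually cyclic if it has a cyclic subgroup of finite index. -/
def VirtuallyCyclic (G : Type*) [Group G] : Prop :=
  ∃ H : Subgroup G, IsCyclic H ∧ H.index ≠ 0

/-!
Points of `∂S` are handled through shadows: the shadow of `u` of depth `T` consists of the points
of `S` whose Gromov product with `u`, seen from `e`, is at least `T`. If `u` lies far out on a
sequence tending to `x ∈ ∂S`, its shadow catches every sequence tending to a point near `x`. So
(C₃) reduces to a statement about isometries and shadows in `S`: given `u, v` with `(u·v)_e ≤ K`,
only finitely many `g` carry some point of the deep shadows of `P₁` and of `P₂` into the shadow of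
`u`, and some point of the deep shadows of `Q₁` and of `Q₂` into the shadow of `v`.

Let `g` be such an element. Seen from `e`, the images over `u` are separated from those over `v`.
Seen from `ge`, the two images over `u` have bounded product, and so have the two over `v`. Hence
some image over `u` and some image over `v` both lie away from `e` as seen from `ge`, and this
bounds `d(e, ge)`. The change of base point from `e` to `ge` is then harmless, and the fixed points
`P₁, Q₁` themselves are carried into the shadows of `u` and `v`. The geodesic `g[P₁, Q₁]` therefore
passes near `e`, so `gz` is near `e` for one of finitely many `z ∈ [P₁, Q₁]`. Two such elements
with the same `z` move the initial segment of `[z, P₁]` to nearby positions, so they differ by an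
element that almost fixes both ends of that segment, and acylindricity leaves finitely many.
-/

open Filter
open scoped Topology

section GromovProduct

variable {S : Type*} [MetricSpace S]

theorem gprod_comm (e x y : S) : gprod e x y = gprod e y x := by
  simp only [gprod, dist_comm x y, add_comm]

theorem gprod_nonneg (e x y : S) : 0 ≤ gprod e x y := by
  have := dist_triangle_right x y e
  simp only [gprod]
  linarith

theorem gprod_le_dist (e x y : S) : gprod e x y ≤ dist x e := by
  have := dist_triangle_left y e x
  simp only [gprod]
  linarith

theorem gprod_map {f : S → S} (hf : Isometry f) (e x y : S) :
    gprod (f e) (f x) (f y) = gprod e x y := by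
  simp only [gprod, hf.dist_eq]

theorem gprod_add_gprod (e e' x : S) : gprod e x e' + gprod e' x e = dist e e' := by
  simp only [gprod, dist_comm e' e]
  ring

theorem gprod_sub_dist_le (e e' x y : S) : gprod e' x y - dist e e' ≤ gprod e x y := by
  have := dist_triangle x e e'
  have := dist_triangle y e e'
  simp only [gprod]
  linarith

end GromovProduct

section Geodesic

variable {S : Type*} [MetricSpace S] {Γ : Set S} {u v : S}

theorem continuousOn_of_dist_eq_abs_sub {γ : ℝ → S} {s : Set ℝ}
    (hγ : ∀ a ∈ s, ∀ b ∈ s, dist (γ a) (γ b) = |a - b|) : ContinuousOn γ s :=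
  (LipschitzOnWith.mk_one fun a ha b hb => (hγ a ha b hb).le).continuousOn

namespace IsGeodesicSegment

theorem left_mem (h : IsGeodesicSegment Γ u v) : u ∈ Γ := by
  obtain ⟨γ, hγ₀, -, -, rfl⟩ := h
  exact ⟨0, ⟨le_rfl, dist_nonneg⟩, hγ₀⟩

theorem right_mem (h : IsGeodesicSegment Γ u v) : v ∈ Γ := by
  obtain ⟨γ, -, hγ₁, -, rfl⟩ := h
  exact ⟨dist u v, ⟨dist_nonneg, le_rfl⟩, hγ₁⟩

theorem image (h : IsGeodesicSegment Γ u v) {f : S → S} (hf : Isometry f) :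
    IsGeodesicSegment (f '' Γ) (f u) (f v) := by
  obtain ⟨γ, hγ₀, hγ₁, hγ, rfl⟩ := h
  refine ⟨f ∘ γ, congrArg f hγ₀, ?_, ?_, ?_⟩
  · rw [hf.dist_eq]
    exact congrArg f hγ₁
  · simpa only [hf.dist_eq, Function.comp_apply] using hγ
  · rw [hf.dist_eq, Set.image_comp]

theorem exists_dist_eq (h : IsGeodesicSegment Γ u v) {t : ℝ} (ht : t ∈ Set.Icc 0 (dist u v)) :
    ∃ p ∈ Γ, dist u p = t := by
  obtain ⟨γ, hγ₀, -, hγ, rfl⟩ := h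
  refine ⟨γ t, ⟨t, ht, rfl⟩, ?_⟩
  rw [← hγ₀, hγ 0 ⟨le_rfl, dist_nonneg⟩ t ht, zero_sub, abs_neg, abs_of_nonneg ht.1]

theorem dist_add_dist {p : S} (h : IsGeodesicSegment Γ u v) (hp : p ∈ Γ) :
    dist u p + dist p v = dist u v := by
  obtain ⟨γ, hγ₀, hγ₁, hγ, rfl⟩ := h
  obtain ⟨t, ht, rfl⟩ := hp
  have hut := hγ 0 ⟨le_rfl, dist_nonneg⟩ t ht
  have htv := hγ t ht _ ⟨dist_nonneg, le_rfl⟩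
  rw [hγ₀, zero_sub, abs_neg, abs_of_nonneg ht.1] at hut
  rw [hγ₁, abs_of_nonpos (sub_nonpos.2 ht.2)] at htv
  linarith

theorem dist_add_dist_le {a p : S} {r : ℝ} (h : IsGeodesicSegment Γ u v) (ha : a ∈ Γ)
    (hpa : dist p a ≤ r) : dist u p + dist p v ≤ dist u v + 2 * r := by
  have := h.dist_add_dist ha
  have := dist_triangle_right u p a
  have := dist_triangle p a v
  linarith

theorem gprod_le_dist {p : S} (h : IsGeodesicSegment Γ u v) (hp : p ∈ Γ) (w : S) :
    gprod w u v ≤ dist w p := by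
  have := h.dist_add_dist hp
  have := dist_triangle_right u w p
  have := dist_triangle_left v w p
  simp only [gprod]
  linarith [dist_comm p w]

theorem isCompact (h : IsGeodesicSegment Γ u v) : IsCompact Γ := by
  obtain ⟨γ, -, -, hγ, rfl⟩ := h
  exact isCompact_Icc.image_of_continuousOn (continuousOn_of_dist_eq_abs_sub hγ)

theorem isPreconnected (h : IsGeodesicSegment Γ u v) : IsPreconnected Γ := by
  obtain ⟨γ, -, -, hγ, rfl⟩ := h
  exact isPreconnected_Icc.image γ (continuousOn_of_dist_eq_abs_sub hγ)

end IsGeodesicSegment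

end Geodesic

section FourPoint

variable {S : Type*} [MetricSpace S] {δ D : ℝ}

namespace DeltaHyperbolic

theorem nonneg (hhyp : DeltaHyperbolic S δ) (hgeo : GeodesicSpace S) (x : S) : 0 ≤ δ := by
  obtain ⟨Γ, hΓ⟩ := hgeo x x
  exact Metric.infDist_nonneg.trans (hhyp x x x Γ Γ Γ hΓ hΓ hΓ x hΓ.left_mem)

theorem exists_mem_union_dist_le (hhyp : DeltaHyperbolic S δ) {x y z p : S} {Γ₁ Γ₂ Γ₃ : Set S}
    (h₁ : IsGeodesicSegment Γ₁ x y) (h₂ : IsGeodesicSegment Γ₂ y z)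
    (h₃ : IsGeodesicSegment Γ₃ z x) (hp : p ∈ Γ₁) : ∃ q ∈ Γ₂ ∪ Γ₃, dist p q ≤ δ := by
  obtain ⟨q, hq, hpq⟩ :=
    (h₂.isCompact.union h₃.isCompact).exists_infDist_eq_dist ⟨y, Or.inl h₂.left_mem⟩ p
  exact ⟨q, hq, hpq ▸ hhyp x y z Γ₁ Γ₂ Γ₃ h₁ h₂ h₃ p hp⟩

theorem exists_mem_dist_le_dist_le (hhyp : DeltaHyperbolic S δ) (hgeo : GeodesicSpace S)
    {x y z : S} {Γ₁ Γ₂ Γ₃ : Set S} (h₁ : IsGeodesicSegment Γ₁ x y)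
    (h₂ : IsGeodesicSegment Γ₂ y z) (h₃ : IsGeodesicSegment Γ₃ z x) :
    ∃ p ∈ Γ₁, (∃ a ∈ Γ₂, dist p a ≤ δ) ∧ ∃ b ∈ Γ₃, dist p b ≤ δ := by
  have hcover : Γ₁ ⊆ Metric.cthickening δ Γ₂ ∪ Metric.cthickening δ Γ₃ := by
    intro p hp
    obtain ⟨q, hq | hq, hpq⟩ := hhyp.exists_mem_union_dist_le h₁ h₂ h₃ hp
    · exact Or.inl (Metric.mem_cthickening_of_dist_le p q δ Γ₂ hq hpq)
    · exact Or.inr (Metric.mem_cthickening_of_dist_le p q δ Γ₃ hq hpq)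
  -- Connectedness of `Γ₁` forces the two closed neighbourhoods covering it to meet on it.
  obtain ⟨p, hp, hp₂, hp₃⟩ := isPreconnected_closed_iff.1 h₁.isPreconnected _ _
    Metric.isClosed_cthickening Metric.isClosed_cthickening hcover
    ⟨y, h₁.right_mem, Metric.self_subset_cthickening Γ₂ h₂.left_mem⟩
    ⟨x, h₁.left_mem, Metric.self_subset_cthickening Γ₃ h₃.right_mem⟩
  have hδ := hhyp.nonneg hgeo x
  rw [h₂.isCompact.cthickening_eq_biUnion_closedBall hδ] at hp₂
  rw [h₃.isCompact.cthickening_eq_biUnion_closedBall hδ] at hp₃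
  simp only [Set.mem_iUnion, Metric.mem_closedBall, exists_prop] at hp₂ hp₃
  exact ⟨p, hp, hp₂, hp₃⟩

theorem exists_mem_dist_le (hhyp : DeltaHyperbolic S δ) (hgeo : GeodesicSpace S) {x y : S}
    {Γ : Set S} (hΓ : IsGeodesicSegment Γ x y) (w : S) :
    ∃ p ∈ Γ, dist w p ≤ gprod w x y + 2 * δ := by
  obtain ⟨Γ₂, h₂⟩ := hgeo y w
  obtain ⟨Γ₃, h₃⟩ := hgeo w x
  obtain ⟨p, hp, ⟨a, ha, hpa⟩, b, hb, hpb⟩ := hhyp.exists_mem_dist_le_dist_le hgeo hΓ h₂ h₃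
  have := hΓ.dist_add_dist hp
  have := h₂.dist_add_dist_le ha hpa
  have := h₃.dist_add_dist_le hb hpb
  refine ⟨p, hp, ?_⟩
  simp only [gprod, dist_comm x w, dist_comm p w, dist_comm p y, dist_comm p x] at *
  linarith

end DeltaHyperbolic

/-- Gromov's four-point condition, a form of hyperbolicity with defect `D` that does not mention
geodesics. -/
def FourPoint (S : Type*) [MetricSpace S] (D : ℝ) : Prop :=
  ∀ w x y z : S, min (gprod w x y) (gprod w y z) - D ≤ gprod w x z

theorem DeltaHyperbolic.fourPoint (hhyp : DeltaHyperbolic S δ) (hgeo : GeodesicSpace S) :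
    FourPoint S (3 * δ) := by
  intro w x y z
  obtain ⟨Γ₁, h₁⟩ := hgeo x z
  obtain ⟨Γ₂, h₂⟩ := hgeo z y
  obtain ⟨Γ₃, h₃⟩ := hgeo y x
  obtain ⟨p, hp, hwp⟩ := hhyp.exists_mem_dist_le hgeo h₁ w
  obtain ⟨q, hq, hpq⟩ := hhyp.exists_mem_union_dist_le h₁ h₂ h₃ hp
  have hwq : dist w q ≤ gprod w x z + 3 * δ := by linarith [dist_triangle w p q]
  rw [gprod_comm w x y, gprod_comm w y z, sub_le_iff_le_add, min_le_iff]
  rcases hq with hq | hq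
  · exact Or.inr ((h₂.gprod_le_dist hq w).trans hwq)
  · exact Or.inl ((h₃.gprod_le_dist hq w).trans hwq)

namespace FourPoint

theorem nonneg (h : FourPoint S D) (x : S) : 0 ≤ D := by
  have := h x x x x
  simp only [min_self] at this
  linarith

theorem sub_le_gprod (h : FourPoint S D) {w x y z : S} {r : ℝ} (hxy : r ≤ gprod w x y)
    (hyz : r ≤ gprod w y z) : r - D ≤ gprod w x z :=
  (sub_le_sub_right (le_min hxy hyz) D).trans (h w x y z)

theorem exists_mem_dist_le (h : FourPoint S D) {x y : S} {Γ : Set S}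
    (hΓ : IsGeodesicSegment Γ x y) (w : S) : ∃ p ∈ Γ, dist w p ≤ gprod w x y + 2 * D := by
  -- Up to `D`, the point of `[x, y]` closest to `w` is the one at distance `(w·y)_x` from `x`.
  obtain ⟨p, hp, hxp⟩ := hΓ.exists_dist_eq (t := gprod x y w)
    ⟨gprod_nonneg x y w, (gprod_le_dist x y w).trans_eq (dist_comm y x)⟩
  have hpy := hΓ.dist_add_dist hp
  have hpxw : gprod p x w = (dist w p - gprod w x y) / 2 := by
    simp only [gprod, dist_comm y x, dist_comm w x, dist_comm y w] at hxp ⊢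
    linarith
  have hpwy : gprod p w y = (dist w p - gprod w x y) / 2 := by
    simp only [gprod, dist_comm y x, dist_comm w x, dist_comm y w, dist_comm y p] at hxp ⊢
    linarith
  have hpxy : gprod p x y = 0 := by
    simp only [gprod, dist_comm y p]
    linarith
  have := h p x w y
  rw [hpxw, hpwy, hpxy, min_self] at this
  exact ⟨p, hp, by linarith⟩

/-- If neither `a₁, a₂` nor `b₁, b₂` have a large product seen from `e'`, then some `aᵢ` and some
`bⱼ` lie away from `e` seen from `e'`; were `e'` far from `e`, both would lie in the direction of
`e'` seen from `e`. -/
theorem dist_le_of_gprod_le (h : FourPoint S D) {e e' a₁ a₂ b₁ b₂ : S} {A B : Set S} {K L : ℝ}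
    (hAB : ∀ a ∈ A, ∀ b ∈ B, gprod e a b ≤ K) (ha₁ : a₁ ∈ A) (ha₂ : a₂ ∈ A) (hb₁ : b₁ ∈ B)
    (hb₂ : b₂ ∈ B) (ha : gprod e' a₁ a₂ ≤ L) (hb : gprod e' b₁ b₂ ≤ L) :
    dist e e' ≤ K + L + 2 * D := by
  have exists_away : ∀ {s : Set S} {x y : S}, x ∈ s → y ∈ s → gprod e' x y ≤ L →
      ∃ z ∈ s, gprod e' z e ≤ L + D := by
    intro s x y hx hy hxy
    have hmin : min (gprod e' x e) (gprod e' e y) ≤ L + D := by linarith [h e' x e y]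
    rcases min_le_iff.1 hmin with hxe | hey
    · exact ⟨x, hx, hxe⟩
    · exact ⟨y, hy, gprod_comm e' y e ▸ hey⟩
  obtain ⟨a, haA, hae⟩ := exists_away ha₁ ha₂ ha
  obtain ⟨b, hbB, hbe⟩ := exists_away hb₁ hb₂ hb
  have hea : dist e e' - (L + D) ≤ gprod e a e' := by linarith [gprod_add_gprod e e' a]
  have heb : dist e e' - (L + D) ≤ gprod e e' b := by
    linarith [gprod_add_gprod e e' b, gprod_comm e e' b]
  linarith [h.sub_le_gprod hea heb, hAB a haA b hbB]

end FourPoint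

end FourPoint

section Shadow

variable {S : Type*} [MetricSpace S] {D K L T : ℝ} {e u v : S}

/-- The shadow of depth `T` cast by `u` when seen from `e`: the points of `S` that lie in the
direction of `u` up to distance `T`. Large shadows play the role of neighbourhoods at infinity. -/
def shadow (e u : S) (T : ℝ) : Set S := {a | T ≤ gprod e u a}

theorem shadow_anti (e u : S) : Antitone (shadow e u) := fun _ _ hT _ ha => hT.trans ha

theorem map_mem_shadow_map {f : S → S} (hf : Isometry f) {a : S} :
    f a ∈ shadow (f e) (f u) T ↔ a ∈ shadow e u T := by
  rw [shadow, shadow, Set.mem_ofPred_eq, Set.mem_ofPred_eq, gprod_map hf]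

theorem le_dist_of_mem_shadow {b : S} (hb : b ∈ shadow e u T) (a : S) :
    T - dist e a ≤ dist a b := by
  have : T ≤ gprod e u b := hb
  have := gprod_le_dist e b u
  linarith [dist_triangle_left b e a, dist_comm a e, gprod_comm e u b]

namespace FourPoint

theorem mem_shadow_of_le_gprod (h : FourPoint S D) {a b : S} (ha : a ∈ shadow e u T)
    (hab : T ≤ gprod e a b) : b ∈ shadow e u (T - D) :=
  h.sub_le_gprod ha hab

theorem gprod_le_of_mem_shadow (h : FourPoint S D) (huv : gprod e u v ≤ K) (hT : K + 2 * D < T)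
    {a b : S} (ha : a ∈ shadow e u T) (hb : b ∈ shadow e v T) : gprod e a b ≤ K + 2 * D := by
  by_contra! hab
  set r := min T (gprod e a b)
  have hr : K + 2 * D < r := lt_min hT hab
  have hub : r - D ≤ gprod e u b :=
    h.sub_le_gprod ((min_le_left _ _).trans ha) (min_le_right _ _)
  have hbv : r - D ≤ gprod e b v := by
    have : T ≤ gprod e v b := hb
    linarith [min_le_left T (gprod e a b), h.nonneg e, gprod_comm e b v]
  linarith [h.sub_le_gprod hub hbv]

theorem dist_le_of_mem_shadow (h : FourPoint S D) {a b : S} {r c : ℝ} (ha : a ∈ shadow e u r)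
    (hb : b ∈ shadow e u r) (hae : dist a e ≤ r + c) (hbe : dist b e ≤ r + c) :
    dist a b ≤ 2 * (c + D) := by
  have hab : r - D ≤ gprod e a b := h.sub_le_gprod (gprod_comm e u a ▸ ha) hb
  simp only [gprod] at hab
  linarith

theorem mem_shadow_of_dist_add_dist (h : FourPoint S D) {z m p : S} {C : ℝ}
    (hez : dist e z ≤ C) (hm : dist z m + dist m p = dist z p) (hp : p ∈ shadow e u T)
    (hT : dist z m - C ≤ T) : m ∈ shadow e u (dist z m - C - D) := by
  have := dist_triangle_left z m e
  have := dist_triangle_left z p e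
  refine h.mem_shadow_of_le_gprod (shadow_anti e u hT hp) ?_
  simp only [gprod, dist_comm p e, dist_comm m e, dist_comm p m]
  linarith

theorem map_mem_shadow (h : FourPoint S D) {f : S → S} (hf : Isometry f) {p : S} {T' : ℝ}
    (hT' : T + dist e (f e) ≤ T') (hp : (f '' shadow e p T' ∩ shadow e u T).Nonempty) :
    f p ∈ shadow e u (T - D) := by
  obtain ⟨_, ⟨a, ha, rfl⟩, hfa⟩ := hp
  have hpa : T' ≤ gprod (f e) (f p) (f a) := (map_mem_shadow_map hf).2 ha
  refine h.mem_shadow_of_le_gprod hfa ?_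
  linarith [gprod_sub_dist_le e (f e) (f p) (f a), gprod_comm e (f p) (f a)]

theorem dist_map_le_of_nonempty (h : FourPoint S D) {f : S → S} (hf : Isometry f)
    {p₁ p₂ q₁ q₂ : S} {T' : ℝ} (huv : gprod e u v ≤ K) (hp : gprod e p₁ p₂ ≤ L)
    (hq : gprod e q₁ q₂ ≤ L) (hT : K + 2 * D < T) (hT' : L + 2 * D < T')
    (hp₁ : (f '' shadow e p₁ T' ∩ shadow e u T).Nonempty)
    (hp₂ : (f '' shadow e p₂ T' ∩ shadow e u T).Nonempty)
    (hq₁ : (f '' shadow e q₁ T' ∩ shadow e v T).Nonempty)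
    (hq₂ : (f '' shadow e q₂ T' ∩ shadow e v T).Nonempty) :
    dist e (f e) ≤ K + L + 6 * D := by
  obtain ⟨_, ⟨a₁, ha₁, rfl⟩, hfa₁⟩ := hp₁
  obtain ⟨_, ⟨a₂, ha₂, rfl⟩, hfa₂⟩ := hp₂
  obtain ⟨_, ⟨b₁, hb₁, rfl⟩, hfb₁⟩ := hq₁
  obtain ⟨_, ⟨b₂, hb₂, rfl⟩, hfb₂⟩ := hq₂
  have ha : gprod (f e) (f a₁) (f a₂) ≤ L + 2 * D :=
    (gprod_map hf e a₁ a₂).trans_le (h.gprod_le_of_mem_shadow hp hT' ha₁ ha₂)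
  have hb : gprod (f e) (f b₁) (f b₂) ≤ L + 2 * D :=
    (gprod_map hf e b₁ b₂).trans_le (h.gprod_le_of_mem_shadow hq hT' hb₁ hb₂)
  have := h.dist_le_of_gprod_le (fun a ha b hb => h.gprod_le_of_mem_shadow huv hT ha hb)
    hfa₁ hfa₂ hfb₁ hfb₂ ha hb
  linarith

end FourPoint

end Shadow

section Finiteness

variable {G S : Type*} [Group G] [MetricSpace S] {act : G → S → S} {D : ℝ}

/-- Acylindricity without a uniform bound on the number of elements that almost fix two distant
points: there are only finitely many of them. -/
def NonuniformlyAcylindrical (act : G → S → S) : Prop :=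
  ∀ ε : ℝ, 0 < ε → ∃ R : ℝ, 0 < R ∧ ∀ x y : S, R ≤ dist x y →
    {g : G | dist x (act g x) ≤ ε ∧ dist y (act g y) ≤ ε}.Finite

theorem AcylindricalAction.nonuniformlyAcylindrical (h : AcylindricalAction act) :
    NonuniformlyAcylindrical act := by
  intro ε hε
  obtain ⟨R, _, hR, -, hfin⟩ := h ε hε
  exact ⟨R, hR, fun x y hxy => (hfin x y hxy).1⟩

theorem IsIsometricAction.finite_of_forall_dist_le (hact : IsIsometricAction act) {F : Set G}
    {x y : S} {ε : ℝ} (hfin : {g : G | dist x (act g x) ≤ ε ∧ dist y (act g y) ≤ ε}.Finite)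
    (hx : ∀ g ∈ F, ∀ h ∈ F, dist (act g x) (act h x) ≤ ε)
    (hy : ∀ g ∈ F, ∀ h ∈ F, dist (act g y) (act h y) ≤ ε) : F.Finite := by
  rcases F.eq_empty_or_nonempty with rfl | ⟨g₀, hg₀⟩
  · exact Set.finite_empty
  have hdist : ∀ (g : G) (p : S), dist p (act (g₀⁻¹ * g) p) = dist (act g₀ p) (act g p) := by
    intro g p
    rw [← (hact.2 g₀).dist_eq p, ← hact.1.2, mul_inv_cancel_left]
  refine (hfin.preimage (mul_right_injective g₀⁻¹).injOn).subset fun g hg => ⟨?_, ?_⟩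
  · exact (hdist g x).trans_le (hx g₀ hg₀ g hg)
  · exact (hdist g y).trans_le (hy g₀ hg₀ g hg)

namespace FourPoint

theorem finite_setOf_dist_le_and_mem_shadow (h : FourPoint S D) (hgeo : GeodesicSpace S)
    (hact : IsIsometricAction act) {C R T : ℝ} (hR : 0 ≤ R) (hT : R + C ≤ T)
    (hfin : ∀ x y : S, R ≤ dist x y → {g : G | dist x (act g x) ≤ 4 * (C + D) ∧
      dist y (act g y) ≤ 4 * (C + D)}.Finite) (e u z p : S) :
    {g : G | dist e (act g z) ≤ C ∧ act g p ∈ shadow e u T}.Finite := by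
  rcases Set.eq_empty_or_nonempty {g : G | dist e (act g z) ≤ C ∧ act g p ∈ shadow e u T}
    with hempty | ⟨g₀, hg₀z, hg₀p⟩
  · exact hempty ▸ Set.finite_empty
  have : 0 ≤ C := dist_nonneg.trans hg₀z
  have hzp : R ≤ dist z p := by
    have := le_dist_of_mem_shadow hg₀p (act g₀ z)
    rw [(hact.2 g₀).dist_eq] at this
    linarith
  obtain ⟨Γ, hΓ⟩ := hgeo z p
  obtain ⟨m, hmΓ, hzm⟩ := hΓ.exists_dist_eq ⟨hR, hzp⟩
  have hm : ∀ g : G, dist e (act g z) ≤ C → act g p ∈ shadow e u T →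
      act g m ∈ shadow e u (R - C - D) ∧ dist (act g m) e ≤ R - C - D + (2 * C + D) := by
    intro g hgz hgp
    have hgm := (hact.2 g).dist_eq z m
    constructor
    · rw [← hzm, ← hgm]
      refine h.mem_shadow_of_dist_add_dist hgz ?_ hgp (by linarith)
      simpa only [(hact.2 g).dist_eq] using hΓ.dist_add_dist hmΓ
    · have := dist_triangle_left (act g m) e (act g z)
      rw [dist_comm (act g z) e] at this
      linarith
  refine hact.finite_of_forall_dist_le (hfin z m hzm.ge) ?_ ?_
  · rintro g ⟨hgz, -⟩ k ⟨hkz, -⟩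
    linarith [dist_triangle_left (act g z) (act k z) e, h.nonneg e]
  · rintro g ⟨hgz, hgp⟩ k ⟨hkz, hkp⟩
    obtain ⟨hgm, hgme⟩ := hm g hgz hgp
    obtain ⟨hkm, hkme⟩ := hm k hkz hkp
    linarith [h.dist_le_of_mem_shadow hgm hkm hgme hkme]

theorem exists_forall_finite_setOf_mem_shadow (h : FourPoint S D) (hgeo : GeodesicSpace S)
    (hact : IsIsometricAction act) (hacyl : NonuniformlyAcylindrical act) (e : S) (K : ℝ) :
    ∃ T : ℝ, ∀ u v : S, gprod e u v ≤ K → ∀ p q : S,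
      {g : G | act g p ∈ shadow e u T ∧ act g q ∈ shadow e v T}.Finite := by
  have hD := h.nonneg e
  set C : ℝ := |K| + 4 * D + 1
  have : 0 < C := by positivity
  obtain ⟨R, hR, hfin⟩ := hacyl (4 * (C + D)) (by positivity)
  refine ⟨R + C, fun u v huv p q => ?_⟩
  obtain ⟨Γ, hΓ⟩ := hgeo p q
  obtain ⟨t, -, ht, hcover⟩ := hΓ.isCompact.finite_cover_balls zero_lt_one
  refine (ht.biUnion fun z _ =>
    h.finite_setOf_dist_le_and_mem_shadow hgeo hact hR.le le_rfl hfin e u z p).subset ?_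
  rintro g ⟨hgp, hgq⟩
  have hpq : gprod e (act g p) (act g q) ≤ |K| + 2 * D :=
    h.gprod_le_of_mem_shadow (huv.trans (le_abs_self K)) (by linarith) hgp hgq
  obtain ⟨_, ⟨m, hmΓ, rfl⟩, hem⟩ := h.exists_mem_dist_le (hΓ.image (hact.2 g)) e
  obtain ⟨z, hz, hmz⟩ := Set.mem_iUnion₂.1 (hcover hmΓ)
  refine Set.mem_iUnion₂.2 ⟨z, hz, ?_, hgp⟩
  calc dist e (act g z) ≤ dist e (act g m) + dist (act g m) (act g z) := dist_triangle _ _ _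
    _ = dist e (act g m) + dist m z := by rw [(hact.2 g).dist_eq]
    _ ≤ C := by linarith [Metric.mem_ball.1 hmz]

theorem exists_forall_finite_setOf_image_shadow_inter (h : FourPoint S D)
    (hgeo : GeodesicSpace S) (hact : IsIsometricAction act)
    (hacyl : NonuniformlyAcylindrical act) (e : S) (K : ℝ) :
    ∃ T : ℝ, ∀ L : ℝ, ∃ T' : ℝ, ∀ u v : S, gprod e u v ≤ K → ∀ p₁ p₂ q₁ q₂ : S,
      gprod e p₁ p₂ ≤ L → gprod e q₁ q₂ ≤ L →
      {g : G | (act g '' shadow e p₁ T' ∩ shadow e u T).Nonempty ∧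
        (act g '' shadow e p₂ T' ∩ shadow e u T).Nonempty ∧
        (act g '' shadow e q₁ T' ∩ shadow e v T).Nonempty ∧
        (act g '' shadow e q₂ T' ∩ shadow e v T).Nonempty}.Finite := by
  have hD := h.nonneg e
  obtain ⟨T₀, hfin⟩ := h.exists_forall_finite_setOf_mem_shadow hgeo hact hacyl e K
  set T : ℝ := max (T₀ + D) (K + 2 * D + 1)
  have hT₀ : T₀ ≤ T - D := by linarith [le_max_left (T₀ + D) (K + 2 * D + 1)]
  have hT : K + 2 * D < T := by linarith [le_max_right (T₀ + D) (K + 2 * D + 1)]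
  refine ⟨T, fun L => ⟨T + (K + L + 6 * D), fun u v huv p₁ p₂ q₁ q₂ hp hq => ?_⟩⟩
  refine (hfin u v huv p₁ q₁).subset ?_
  rintro g ⟨hp₁, hp₂, hq₁, hq₂⟩
  have hg : T + dist e (act g e) ≤ T + (K + L + 6 * D) := by
    gcongr
    exact h.dist_map_le_of_nonempty (hact.2 g) huv hp hq hT
      (by linarith [gprod_nonneg e u v]) hp₁ hp₂ hq₁ hq₂
  exact ⟨shadow_anti e u hT₀ (h.map_mem_shadow (hact.2 g) hg hp₁),
    shadow_anti e v hT₀ (h.map_mem_shadow (hact.2 g) hg hq₁)⟩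

end FourPoint

end Finiteness

section Boundary

variable {S : Type*} [MetricSpace S] {D ζ : ℝ} {e : S}

theorem exists_tendstoBd (x : GBoundary S e) : ∃ s : ℕ → S, TendstoBd e s x := by
  obtain ⟨s, hs⟩ := Quot.exists_rep x
  exact ⟨s.1, s.2, hs⟩

theorem ConvToInfty.eventually_mem_shadow {s : ℕ → S} (hs : ConvToInfty e s) (T : ℝ) :
    ∀ᶠ m in atTop, ∀ᶠ n in atTop, s n ∈ shadow e (s m) T := by
  have := tendsto_atTop.1 hs T
  rw [← prod_atTop_atTop_eq] at this
  exact this.curry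

namespace TendstoBd

theorem map {s : ℕ → S} {x : GBoundary S e} (h : TendstoBd e s x) {f : S → S}
    (hf : Isometry f) : TendstoBd e (fun n => f (s n)) (bdMap e f hf x) := by
  obtain ⟨hs, rfl⟩ := h
  exact ⟨hs.comp hf, rfl⟩

theorem eq_of_tendsto_gprod {s t : ℕ → S} {x y : GBoundary S e} (hs : TendstoBd e s x)
    (ht : TendstoBd e t y) (h : Tendsto (fun n => gprod e (s n) (t n)) atTop atTop) :
    x = y := by
  obtain ⟨_, rfl⟩ := hs
  obtain ⟨_, rfl⟩ := ht
  exact Quot.sound h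

end TendstoBd

theorem FourPoint.exists_eventually_gprod_le (h : FourPoint S D) {s t : ℕ → S}
    {x y : GBoundary S e} (hs : TendstoBd e s x) (ht : TendstoBd e t y) (hxy : x ≠ y) :
    ∃ K : ℝ, ∀ᶠ n in atTop, gprod e (s n) (t n) ≤ K := by
  have hnot : ¬ Tendsto (fun n => gprod e (s n) (t n)) atTop atTop :=
    fun hst => hxy (hs.eq_of_tendsto_gprod ht hst)
  simp only [tendsto_atTop, not_forall, not_eventually, not_le] at hnot
  obtain ⟨k, hk⟩ := hnot
  obtain ⟨m, hm, hsm, htm⟩ := (hk.and_eventually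
    ((hs.1.eventually_mem_shadow (k + 2 * D + 1)).and
      (ht.1.eventually_mem_shadow (k + 2 * D + 1)))).exists
  refine ⟨k + 2 * D, ?_⟩
  filter_upwards [hsm, htm] with n hsn htn
  exact h.gprod_le_of_mem_shadow hm.le (lt_add_one _) hsn htn

theorem VisualParam.lt_gprodBB (hζ : VisualParam e ζ) {x y : GBoundary S e} {T : ℝ}
    (hT : 0 ≤ T) (hxy : rhoChain e ζ x y < Real.exp (-ζ * T) / 2) :
    (T : EReal) < gprodBB e x y := by
  have hdExp : dExp e ζ x y < Real.exp (-ζ * T) := by linarith [(hζ.2.2 x y).1]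
  unfold dExp at hdExp
  split_ifs at hdExp with htop
  · exact htop ▸ EReal.coe_lt_top T
  have hlt : T < (gprodBB e x y).toReal := by
    have := Real.exp_lt_exp.1 hdExp
    rwa [neg_mul, neg_mul, neg_lt_neg_iff, mul_lt_mul_iff_right₀ hζ.1] at this
  -- As `0 ≤ T`, the real number in `hlt` is not the junk value `⊥.toReal = 0`.
  have hbot : gprodBB e x y ≠ ⊥ := by
    intro hbot
    rw [hbot, EReal.toReal_bot] at hlt
    exact hlt.not_ge hT
  rw [← EReal.coe_toReal htop hbot]
  exact EReal.coe_lt_coe_iff.2 hlt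

theorem TendstoBd.eventually_lt_gprod {s t : ℕ → S} {x y : GBoundary S e} {T : ℝ}
    (hs : TendstoBd e s x) (ht : TendstoBd e t y) (hT : (T : EReal) < gprodBB e x y) :
    ∀ᶠ p : ℕ × ℕ in atTop, T < gprod e (s p.1) (t p.2) := by
  have hlim := hT.trans_le (sInf_le ⟨s, t, hs, ht, rfl⟩)
  exact (eventually_lt_of_lt_liminf hlim).mono fun _ => EReal.coe_lt_coe_iff.1

/-- `W ⊆ S` captures `U ⊆ ∂S` if every sequence tending to a point of `U` is eventually in `W`. It
transfers conditions on subsets of the boundary to conditions on subsets of `S`. -/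
def Captures (e : S) (W : Set S) (U : Set (GBoundary S e)) : Prop :=
  ∀ x ∈ U, ∀ s : ℕ → S, TendstoBd e s x → ∀ᶠ n in atTop, s n ∈ W

theorem Captures.nonempty_image_inter {P W : Set S} {A U : Set (GBoundary S e)}
    (hA : Captures e P A) (hU : Captures e W U) {f : S → S} (hf : Isometry f)
    (h : (bdMap e f hf '' A ∩ U).Nonempty) : (f '' P ∩ W).Nonempty := by
  obtain ⟨_, ⟨a, ha, rfl⟩, hfa⟩ := h
  obtain ⟨s, hs⟩ := exists_tendstoBd a
  obtain ⟨n, hsn, hfsn⟩ := ((hA a ha s hs).and (hU _ hfa _ (hs.map hf))).exists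
  exact ⟨f (s n), ⟨s n, hsn, rfl⟩, hfsn⟩

namespace FourPoint

theorem exists_isOpen_captures_shadow (h : FourPoint S D) (hζ : VisualParam e ζ) {s : ℕ → S}
    {x : GBoundary S e} (hs : TendstoBd e s x) (T : ℝ) :
    ∃ U : Set (GBoundary S e), IsOpen[bdTopology S e ζ] U ∧ x ∈ U ∧
      ∀ᶠ n in atTop, Captures e (shadow e (s n) T) U := by
  set T' : ℝ := max 0 (T + D)
  have hT' : T ≤ T' - D := by linarith [le_max_right 0 (T + D)]
  refine ⟨{y | rhoChain e ζ x y < Real.exp (-ζ * T') / 2},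
    TopologicalSpace.isOpen_generateFrom_of_mem ⟨x, _, by positivity, rfl⟩, ?_, ?_⟩
  · have hxx : rhoChain e ζ x x = 0 := (hζ.2.1.2.1 x x).2 rfl
    exact hxx.trans_lt (by positivity)
  filter_upwards [hs.1.eventually_mem_shadow T'] with n hn y hy t ht
  have hst := hs.eventually_lt_gprod ht (hζ.lt_gprodBB (le_max_left _ _) hy)
  rw [← prod_atTop_atTop_eq, eventually_swap_iff] at hst
  filter_upwards [hst.curry] with j hj
  obtain ⟨i, hni, hij⟩ := (hn.and hj).exists
  exact shadow_anti e (s n) hT' (h.mem_shadow_of_le_gprod hni hij.le)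

theorem exists_captures_shadow_of_ne (h : FourPoint S D) (hζ : VisualParam e ζ)
    {x y : GBoundary S e} (hxy : x ≠ y) :
    ∃ K : ℝ, ∀ T : ℝ, ∃ u v : S, gprod e u v ≤ K ∧ ∃ U V : Set (GBoundary S e),
      IsOpen[bdTopology S e ζ] U ∧ IsOpen[bdTopology S e ζ] V ∧ x ∈ U ∧ y ∈ V ∧
      Captures e (shadow e u T) U ∧ Captures e (shadow e v T) V := by
  obtain ⟨s, hs⟩ := exists_tendstoBd x
  obtain ⟨t, ht⟩ := exists_tendstoBd y
  obtain ⟨K, hK⟩ := h.exists_eventually_gprod_le hs ht hxy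
  refine ⟨K, fun T => ?_⟩
  obtain ⟨U, hUo, hxU, hU⟩ := h.exists_isOpen_captures_shadow hζ hs T
  obtain ⟨V, hVo, hyV, hV⟩ := h.exists_isOpen_captures_shadow hζ ht T
  obtain ⟨n, hKn, hUn, hVn⟩ := (hK.and (hU.and hV)).exists
  exact ⟨s n, t n, hKn, U, V, hUo, hVo, hxU, hyV, hUn, hVn⟩

end FourPoint

end Boundary

theorem statement13_general {G S : Type*} [Group G] [MetricSpace S] {δ : ℝ}
    (hgeo : GeodesicSpace S) (hhyp : DeltaHyperbolic S δ)
    {act : G → S → S} (hact : IsIsometricAction act) (hacyl : NonuniformlyAcylindrical act)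
    {e : S} {ζ : ℝ} (hζ : VisualParam e ζ) {x y : GBoundary S e} (hxy : x ≠ y) :
    ∃ U V : Set (GBoundary S e), IsOpen[bdTopology S e ζ] U ∧ IsOpen[bdTopology S e ζ] V ∧
      x ∈ U ∧ y ∈ V ∧ ∀ p q r s : GBoundary S e, p ≠ q → r ≠ s →
        ∃ A B C D : Set (GBoundary S e), IsOpen[bdTopology S e ζ] A ∧
          IsOpen[bdTopology S e ζ] B ∧ IsOpen[bdTopology S e ζ] C ∧
          IsOpen[bdTopology S e ζ] D ∧ p ∈ A ∧ q ∈ B ∧ r ∈ C ∧ s ∈ D ∧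
          {g : G | (bdMap e (act g) (hact.2 g) '' A ∩ U).Nonempty ∧
            (bdMap e (act g) (hact.2 g) '' B ∩ U).Nonempty ∧
            (bdMap e (act g) (hact.2 g) '' C ∩ V).Nonempty ∧
            (bdMap e (act g) (hact.2 g) '' D ∩ V).Nonempty}.Finite := by
  have h := hhyp.fourPoint hgeo
  obtain ⟨K, hK⟩ := h.exists_captures_shadow_of_ne hζ hxy
  obtain ⟨T, hT⟩ := h.exists_forall_finite_setOf_image_shadow_inter hgeo hact hacyl e K
  obtain ⟨u, v, huv, U, V, hUo, hVo, hxU, hyV, hU, hV⟩ := hK T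
  refine ⟨U, V, hUo, hVo, hxU, hyV, fun p q r s hpq hrs => ?_⟩
  obtain ⟨L₁, hL₁⟩ := h.exists_captures_shadow_of_ne hζ hpq
  obtain ⟨L₂, hL₂⟩ := h.exists_captures_shadow_of_ne hζ hrs
  obtain ⟨T', hT'⟩ := hT (max L₁ L₂)
  obtain ⟨p₁, p₂, hp, A, B, hAo, hBo, hpA, hqB, hA, hB⟩ := hL₁ T'
  obtain ⟨q₁, q₂, hq, C, D, hCo, hDo, hrC, hsD, hC, hD⟩ := hL₂ T'
  have hfin := hT' u v huv p₁ p₂ q₁ q₂ (hp.trans (le_max_left _ _)) (hq.trans (le_max_right _ _))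
  refine ⟨A, B, C, D, hAo, hBo, hCo, hDo, hpA, hqB, hrC, hsD, hfin.subset ?_⟩
  rintro g ⟨hgA, hgB, hgC, hgD⟩
  exact ⟨hA.nonempty_image_inter hU (hact.2 g) hgA, hB.nonempty_image_inter hU (hact.2 g) hgB,
    hC.nonempty_image_inter hV (hact.2 g) hgC, hD.nonempty_image_inter hV (hact.2 g) hgD⟩

/-- For an acylindrical isometric action of `G` on a geodesic
`δ`-hyperbolic space, every pair of distinct boundary points satisfies condition (C₃)
for the induced action on the Gromov boundary. -/
theorem statement13 {G S : Type*} [Group G] [MetricSpace S] (δ : ℝ) (hδ : 0 ≤ δ)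
    (hgeo : GeodesicSpace S) (hhyp : DeltaHyperbolic S δ)
    {act : G → S → S} (hact : IsIsometricAction act)
    (hacyl : AcylindricalAction act)
    (e : S) (ζ : ℝ) (hζ : VisualParam e ζ)
    (x y : GBoundary S e) (hxy : x ≠ y) :
    @PairC3 G (GBoundary S e) (bdTopology S e ζ)
      (fun g => bdMap e (act g) (hact.2 g)) x y := by
  obtain ⟨U, V, hU, hV, hxU, hyV, hfin⟩ :=
    statement13_general hgeo hhyp hact hacyl.nonuniformlyAcylindrical hζ hxy
  exact ⟨U, V, hU, hV, hxU, hyV, fun p q r s hpq _ _ _ _ hrs => hfin p q r s hpq hrs⟩
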